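/- arXiv:1610.08861 — 2 statements merged into one kernel-verified Lean document; each statement's English description precedes it below -/
import Mathlib

section
/- Let μ be a probability measure on ℝ with μ((−∞,0]) = 0 and let k_μ be its Polya kernel. Then k_μ is positive-definite: for every n ∈ ℕ and all real numbers x₁, …, xₙ, the n×n real symmetric matrix with (i,j) entry k_μ(x_i − x_j) is positive semidefinite. -/
open MeasureTheory

/-! The triangular kernel of width `t` is a normalized overlap length of intervals,
`t * max 0 (1 - |a - b| / t) = |[a, a + t] ∩ [b, b + t]|`, so its kernel matrices are, up to the
factor `t⁻¹`, Gram matrices of indicator functions in `L²(ℝ)`. A Polya kernel is an average of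
triangular kernels, and averaging preserves positive semidefiniteness. -/

section IntegralOfMatrices

open scoped ComplexOrder

theorem posSemidef_integral {α ι 𝕜 : Type*} [MeasurableSpace α] [RCLike 𝕜] {μ : Measure α}
    {M : α → Matrix ι ι 𝕜} (hint : ∀ i j, Integrable (fun a => M a i j) μ)
    (hpos : ∀ᵐ a ∂μ, (M a).PosSemidef) :
    (Matrix.of fun i j => ∫ a, M a i j ∂μ).PosSemidef := by
  refine ⟨Matrix.IsHermitian.ext fun i j => ?_, fun v => ?_⟩
  · calc star (∫ a, M a j i ∂μ) = ∫ a, star (M a j i) ∂μ := integral_conj.symm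
      _ = ∫ a, M a i j ∂μ := integral_congr_ae (hpos.mono fun a ha => ha.isHermitian.apply i j)
  · have hterm (i j : ι) : Integrable (fun a => star (v i) * M a i j * v j) μ :=
      ((hint i j).const_mul _).mul_const _
    calc 0 ≤ ∫ a, v.sum fun i vi => v.sum fun j vj => star vi * M a i j * vj ∂μ :=
          integral_nonneg_of_ae (hpos.mono fun a ha => ha.2 v)
      _ = v.sum fun i vi => v.sum fun j vj => star vi * (∫ a, M a i j ∂μ) * vj := by
          simp only [Finsupp.sum]
          rw [integral_finsetSum _ fun i _ => integrable_finsetSum _ fun j _ => hterm i j]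
          simp only [integral_finsetSum _ fun j _ => hterm _ j, integral_mul_const,
            integral_const_mul]

end IntegralOfMatrices

/-- The triangular (tent) kernel of width `t`, meant for `0 < t`. -/
noncomputable def triangularKernel (t r : ℝ) : ℝ :=
  max 0 (1 - |r| / t)

/-- The Polya kernel of `μ`, the mixture of triangular kernels with widths distributed according
to `μ`. Mass of `μ` outside `(0, ∞)` is ignored. -/
noncomputable def polyaKernel (μ : Measure ℝ) (r : ℝ) : ℝ :=
  ∫ t in Set.Ioi 0, triangularKernel t r ∂μ

theorem volume_real_Icc_inter_Icc_add (a b t : ℝ) :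
    volume.real (Set.Icc a (a + t) ∩ Set.Icc b (b + t)) = max 0 (t - |a - b|) := by
  rw [Set.Icc_inter_Icc, measureReal_def, Real.volume_Icc, ENNReal.toReal_ofReal', max_comm,
    min_add_add_right, ← max_sub_min_eq_abs']
  congr 1
  ring

theorem triangularKernel_sub_eq_volume_real_inter {t : ℝ} (ht : 0 < t) (a b : ℝ) :
    triangularKernel t (a - b) =
      t⁻¹ * volume.real (Set.Icc a (a + t) ∩ Set.Icc b (b + t)) := by
  rw [volume_real_Icc_inter_Icc_add, mul_max_of_nonneg _ _ (inv_nonneg.2 ht.le), mul_zero, mul_sub,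
    inv_mul_cancel₀ ht.ne', inv_mul_eq_div, triangularKernel]

theorem posSemidef_triangularKernel {ι : Type*} [Finite ι] {t : ℝ} (ht : 0 < t) (x : ι → ℝ) :
    (Matrix.of fun i j => triangularKernel t (x i - x j)).PosSemidef := by
  have hoverlap : (Matrix.of fun i j => volume.real
      (Set.Icc (x i) (x i + t) ∩ Set.Icc (x j) (x j + t))).PosSemidef :=
    posSemidef_matrix_measure_inter (fun _ => measurableSet_Icc) fun _ => measure_Icc_lt_top.ne
  convert hoverlap.smul (inv_nonneg.2 ht.le) using 1
  ext i j
  exact triangularKernel_sub_eq_volume_real_inter ht (x i) (x j)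

theorem triangularKernel_nonneg (t r : ℝ) : 0 ≤ triangularKernel t r :=
  le_max_left _ _

theorem triangularKernel_le_one {t : ℝ} (ht : 0 ≤ t) (r : ℝ) : triangularKernel t r ≤ 1 :=
  max_le zero_le_one (sub_le_self _ (by positivity))

theorem integrableOn_triangularKernel (μ : Measure ℝ) [IsFiniteMeasure μ] (r : ℝ) :
    IntegrableOn (fun t => triangularKernel t r) (Set.Ioi 0) μ := by
  refine Integrable.of_bound (C := 1) (by unfold triangularKernel; fun_prop) ?_
  filter_upwards [ae_restrict_mem measurableSet_Ioi] with t ht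
  rw [Real.norm_of_nonneg (triangularKernel_nonneg t r)]
  exact triangularKernel_le_one (Set.mem_Ioi.1 ht).le r

theorem polya_kernel_posdef_general (μ : Measure ℝ) [IsFiniteMeasure μ] {ι : Type*} [Finite ι]
    (x : ι → ℝ) : (Matrix.of fun i j => polyaKernel μ (x i - x j)).PosSemidef :=
  posSemidef_integral (fun _ _ => integrableOn_triangularKernel μ _) <|
    (ae_restrict_mem measurableSet_Ioi).mono fun _ ht => posSemidef_triangularKernel ht x

/-- The Polya kernel of a probability measure with positive support is positive-definite:
every kernel matrix `(k_μ (x i - x j))_{i,j}` is positive semidefinite. -/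
theorem polya_kernel_posdef (μ : Measure ℝ) [IsProbabilityMeasure μ]
    (hμ : μ (Set.Iic 0) = 0)
    (k : ℝ → ℝ)
    (hk : ∀ r : ℝ, k r = ∫ x in Set.Ioi (0 : ℝ), max 0 (1 - |r| / x) ∂μ)
    (n : ℕ) (x : Fin n → ℝ) (v : Fin n → ℝ) :
    0 ≤ ∑ i : Fin n, ∑ j : Fin n, v i * k (x i - x j) * v j := by
  obtain rfl : k = polyaKernel μ := funext hk
  simpa [dotProduct, Matrix.mulVec, Finset.mul_sum, mul_assoc] using
    (polya_kernel_posdef_general μ x).dotProduct_mulVec_nonneg v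
end

section
/- For every σ > 0 and r ≥ 0: ∫₀^∞ max{0, 1 − r/x} · (√2/(σ√π)) e^{−x²/(2σ²)} dx = erfc(r/(σ√2)) − (1/√π) · (r/(σ√2)) · E₁(r²/(2σ²)) for r > 0, and equals 1 for r = 0, where erfc(x) = (2/√π) ∫_x^∞ e^{−t²} dt is the complementary error function and E₁(z) = ∫_z^∞ e^{−u}/u du is the exponential integral. -/
open MeasureTheory Real

/-- The exponential integral `E₁(z) = ∫_z^∞ e^{-u}/u du`. -/
noncomputable def expIntegralE1 (z : ℝ) : ℝ :=
  ∫ u in Set.Ioi z, Real.exp (-u) / u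

/-- The complementary error function `erfc(x) = (2/√π) ∫_x^∞ e^{-t²} dt`. -/
noncomputable def erfc (x : ℝ) : ℝ :=
  (2 / Real.sqrt π) * ∫ t in Set.Ioi x, Real.exp (-t ^ 2)

/-! On `(0, r]` the tent `max 0 (1 - r / x)` vanishes and on `(r, ∞)` it equals `1 - r / x`, so the
Polya kernel of a density `f` is `∫_r^∞ f(x) dx - r ∫_r^∞ f(x)/x dx`. For the half-normal density,
the substitutions `t = x / (σ√2)` and `u = x² / (2σ²)` turn these two integrals into `erfc` and `E₁`
respectively. -/

section PolyaKernel

variable {μ : Measure ℝ} {f : ℝ → ℝ} {r : ℝ}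

lemma integrableOn_Ioi_div_id (hr : 0 < r) (hf : IntegrableOn f (Set.Ioi r) μ) :
    IntegrableOn (fun x ↦ f x / x) (Set.Ioi r) μ := by
  have inv_le : ∀ᵐ x ∂μ.restrict (Set.Ioi r), ‖x⁻¹‖ ≤ r⁻¹ := by
    filter_upwards [ae_restrict_mem measurableSet_Ioi] with x (hx : r < x)
    rw [norm_inv, norm_of_nonneg (hr.trans hx).le]
    gcongr
  simp only [div_eq_mul_inv]
  exact hf.mul_bdd (c := r⁻¹) measurable_inv.aestronglyMeasurable inv_le

lemma setIntegral_Ioi_max_zero_one_sub_div_mul (hr : 0 < r) (hf : IntegrableOn f (Set.Ioi r) μ) :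
    ∫ x in Set.Ioi 0, max 0 (1 - r / x) * f x ∂μ
      = (∫ x in Set.Ioi r, f x ∂μ) - r * ∫ x in Set.Ioi r, f x / x ∂μ := by
  have tent_eq_zero : ∀ x ∈ Set.Ioi 0 \ Set.Ioi r, max 0 (1 - r / x) * f x = 0 := by
    rintro x ⟨hx₀ : 0 < x, hxr⟩
    have : 1 ≤ r / x := (one_le_div₀ hx₀).2 (not_lt.1 hxr)
    rw [max_eq_left (sub_nonpos.2 this), zero_mul]
  have tent_eq : Set.EqOn (fun x ↦ max 0 (1 - r / x) * f x) (fun x ↦ f x - r * (f x / x))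
      (Set.Ioi r) := by
    intro x (hx : r < x)
    have : r / x ≤ 1 := (div_le_one₀ (hr.trans hx)).2 hx.le
    simp only [max_eq_right (sub_nonneg.2 this)]
    ring
  calc ∫ x in Set.Ioi 0, max 0 (1 - r / x) * f x ∂μ
      = ∫ x in Set.Ioi r, max 0 (1 - r / x) * f x ∂μ :=
        setIntegral_eq_of_subset_of_forall_sdiff_eq_zero measurableSet_Ioi
          (Set.Ioi_subset_Ioi hr.le) tent_eq_zero
    _ = ∫ x in Set.Ioi r, (f x - r * (f x / x)) ∂μ :=
        setIntegral_congr_fun measurableSet_Ioi tent_eq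
    _ = (∫ x in Set.Ioi r, f x ∂μ) - r * ∫ x in Set.Ioi r, f x / x ∂μ := by
        rw [integral_sub hf ((integrableOn_Ioi_div_id hr hf).const_mul r), integral_const_mul]

end PolyaKernel

lemma erfc_zero : erfc 0 = 1 := by
  have gaussian : ∫ t in Set.Ioi (0 : ℝ), exp (-t ^ 2) = √π / 2 := by
    simpa using integral_gaussian_Ioi 1
  rw [erfc, gaussian]
  field_simp

lemma integral_Ioi_exp_neg_mul_sq {c : ℝ} (hc : 0 < c) (a : ℝ) :
    ∫ x in Set.Ioi a, exp (-(c * x) ^ 2) = √π / 2 * c⁻¹ * erfc (c * a) := by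
  rw [integral_comp_mul_left_Ioi (fun t ↦ exp (-t ^ 2)) a hc, erfc, smul_eq_mul]
  field_simp

-- At `a = 0` both integrals diverge, so the identity then reads `0 = 0`.
lemma integral_Ioi_exp_neg_rpow_div {a p : ℝ} (ha : 0 ≤ a) (hp : 0 < p) :
    ∫ x in Set.Ioi a, exp (-x ^ p) / x = p⁻¹ * expIntegralE1 (a ^ p) := by
  have substitution := integral_comp_rpow_Ioi_of_pos' (g := fun u ↦ exp (-u) / u) hp
    (rpow_nonneg ha p)
  rw [rpow_rpow_inv ha hp.ne'] at substitution
  rw [expIntegralE1, ← substitution, ← integral_const_mul]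
  refine setIntegral_congr_fun measurableSet_Ioi fun x (hx : a < x) ↦ ?_
  have hx₀ : 0 < x := ha.trans_lt hx
  simp only [smul_eq_mul, rpow_sub_one hx₀.ne']
  field_simp

-- No power of `c` appears in front because `dx / x` is invariant under scaling.
lemma integral_Ioi_exp_neg_mul_rpow_div {a c p : ℝ} (hc : 0 < c) (ha : 0 ≤ a) (hp : 0 < p) :
    ∫ x in Set.Ioi a, exp (-(c * x) ^ p) / x = p⁻¹ * expIntegralE1 ((c * a) ^ p) := by
  rw [← integral_Ioi_exp_neg_rpow_div (mul_nonneg hc.le ha) hp,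
    ← integral_comp_mul_left_Ioi' _ a hc, smul_eq_mul, ← integral_const_mul]
  congr! 2
  field_simp

/-- The density `√2 / (σ√π) · e^{-x²/(2σ²)}` of the half-normal distribution `HN(σ)`. The formula is
used on all of `ℝ`, so the restriction to `x > 0` has to come from the domain of integration. -/
noncomputable def halfNormalPDF (σ x : ℝ) : ℝ :=
  √2 / (σ * √π) * exp (-(x ^ 2 / (2 * σ ^ 2)))

lemma inv_mul_sqrt_two_mul_sq (σ x : ℝ) :
    ((σ * √2)⁻¹ * x) ^ 2 = x ^ 2 / (2 * σ ^ 2) := by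
  rw [mul_pow, inv_pow, mul_pow, sq_sqrt zero_le_two]
  field_simp

lemma halfNormalPDF_eq_const_mul_exp_neg_mul_sq (σ x : ℝ) :
    halfNormalPDF σ x = 2 / √π * (σ * √2)⁻¹ * exp (-((σ * √2)⁻¹ * x) ^ 2) := by
  have const_eq : √2 / (σ * √π) = 2 / √π * (σ * √2)⁻¹ := by
    nth_rw 2 [← mul_self_sqrt zero_le_two]
    field_simp
  rw [halfNormalPDF, const_eq, inv_mul_sqrt_two_mul_sq]

section HalfNormal

variable {σ : ℝ}

lemma integrable_halfNormalPDF (hσ : 0 < σ) : Integrable (halfNormalPDF σ) := by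
  have gaussian : Integrable fun x : ℝ ↦ exp (-x ^ 2) := by
    simpa using integrable_exp_neg_mul_sq one_pos
  have hc : (σ * √2)⁻¹ ≠ 0 := by positivity
  simpa only [← halfNormalPDF_eq_const_mul_exp_neg_mul_sq] using
    (gaussian.comp_mul_left' hc).const_mul (2 / √π * (σ * √2)⁻¹)

lemma integral_Ioi_halfNormalPDF (hσ : 0 < σ) (r : ℝ) :
    ∫ x in Set.Ioi r, halfNormalPDF σ x = erfc (r / (σ * √2)) := by
  have hc : 0 < (σ * √2)⁻¹ := by positivity
  simp only [halfNormalPDF_eq_const_mul_exp_neg_mul_sq]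
  rw [integral_const_mul, integral_Ioi_exp_neg_mul_sq hc, div_eq_inv_mul r]
  field_simp

lemma integral_Ioi_halfNormalPDF_div_id (hσ : 0 < σ) {r : ℝ} (hr : 0 ≤ r) :
    ∫ x in Set.Ioi r, halfNormalPDF σ x / x
      = expIntegralE1 (r ^ 2 / (2 * σ ^ 2)) / (σ * √(2 * π)) := by
  have hc : 0 < (σ * √2)⁻¹ := by positivity
  have tail := integral_Ioi_exp_neg_mul_rpow_div hc hr two_pos
  simp only [rpow_two] at tail
  simp only [halfNormalPDF_eq_const_mul_exp_neg_mul_sq, mul_div_assoc (2 / √π * (σ * √2)⁻¹)]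
  rw [integral_const_mul, tail, inv_mul_sqrt_two_mul_sq, sqrt_mul zero_le_two]
  field_simp

end HalfNormal

/-- Equation (16): the Polya kernel constructed from the half-normal distribution
`HN(σ)` equals `erfc(r/(σ√2)) - (1/√π)(r/(σ√2)) E₁(r²/(2σ²))` for `r > 0`, and `1`
for `r = 0`. -/
theorem polya_kernel_half_normal (σ : ℝ) (hσ : 0 < σ) (r : ℝ) (hr : 0 ≤ r) :
    (0 < r →
      ∫ x in Set.Ioi (0 : ℝ),
          max 0 (1 - r / x) * (Real.sqrt 2 / (σ * Real.sqrt π)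
            * Real.exp (-(x ^ 2 / (2 * σ ^ 2))))
        = erfc (r / (σ * Real.sqrt 2))
          - (1 / Real.sqrt π) * (r / (σ * Real.sqrt 2))
            * expIntegralE1 (r ^ 2 / (2 * σ ^ 2))) ∧
    (r = 0 →
      ∫ x in Set.Ioi (0 : ℝ),
          max 0 (1 - r / x) * (Real.sqrt 2 / (σ * Real.sqrt π)
            * Real.exp (-(x ^ 2 / (2 * σ ^ 2))))
        = 1) := by
  refine ⟨fun hr₀ ↦ ?_, fun hr₀ ↦ ?_⟩
  · calc ∫ x in Set.Ioi 0, max 0 (1 - r / x) * halfNormalPDF σ x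
        = (∫ x in Set.Ioi r, halfNormalPDF σ x) - r * ∫ x in Set.Ioi r, halfNormalPDF σ x / x :=
          setIntegral_Ioi_max_zero_one_sub_div_mul hr₀ (integrable_halfNormalPDF hσ).integrableOn
      _ = erfc (r / (σ * √2)) - r * (expIntegralE1 (r ^ 2 / (2 * σ ^ 2)) / (σ * √(2 * π))) := by
          rw [integral_Ioi_halfNormalPDF hσ, integral_Ioi_halfNormalPDF_div_id hσ hr₀.le]
      _ = _ := by
          rw [sqrt_mul zero_le_two]
          field_simp
  · calc ∫ x in Set.Ioi 0, max 0 (1 - r / x) * halfNormalPDF σ x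
        = ∫ x in Set.Ioi 0, halfNormalPDF σ x := by simp [hr₀]
      _ = 1 := by rw [integral_Ioi_halfNormalPDF hσ, zero_div, erfc_zero]
end
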